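/- arXiv:2207.02040 — 3 statements merged into one kernel-verified Lean document; each statement's English description precedes it below -/
import Mathlib

section
/- The multiset {3, 3, 2, 2, 2} is outerplane-unigraphic on n = 5 vertices: there exists an outerplane graph on 5 vertices with degree multiset {3, 3, 2, 2, 2} (the pentagon with a single chord), and any two outerplane graphs on 5 vertices with this degree multiset are isomorphic. (This is the exceptional unigraphic polytope degree sequence 5, 4^2, 3^3 of the paper's Theorem 2.) -/
/-- The vertices strictly between `a` and `b`, traversing the cycle `ZMod n`
from `a` towards `b` in the direction of increasing residues. -/
def Between (n : ℕ) (a b v : ZMod n) : Prop :=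
  0 < (v - a).val ∧ (v - a).val < (b - a).val

/-- `e` is an edge of the standard `n`-cycle on `ZMod n`. -/
def IsCycleEdge (n : ℕ) (e : Sym2 (ZMod n)) : Prop :=
  ∃ i : ZMod n, e = s(i, i + 1)

/-- A chord: an unordered pair of distinct vertices of `ZMod n` that is not an
edge of the standard `n`-cycle. -/
def IsChord (n : ℕ) (e : Sym2 (ZMod n)) : Prop :=
  ¬ e.IsDiag ∧ ¬ IsCycleEdge n e

/-- Two chords cross if exactly one endpoint of the second lies strictly between
the endpoints of the first (traversing in the direction of increasing residues). -/
def Cross (n : ℕ) (e f : Sym2 (ZMod n)) : Prop :=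
  ∀ a b c d : ZMod n, e = s(a, b) → f = s(c, d) →
    Xor' (Between n a b c) (Between n a b d)

/-- `S` is a set of pairwise non-crossing chords of the standard `n`-cycle. -/
def NonCrossingChords (n : ℕ) (S : Set (Sym2 (ZMod n))) : Prop :=
  (∀ e ∈ S, IsChord n e) ∧ ∀ e ∈ S, ∀ f ∈ S, e ≠ f → ¬ Cross n e f

/-- The chord graph of a set `S` of chords: the simple graph on `ZMod n`
whose edge set is `S`. -/
def chordGraph (n : ℕ) (S : Set (Sym2 (ZMod n))) : SimpleGraph (ZMod n) :=
  SimpleGraph.fromEdgeSet S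

/-- A vertex is chord-free for `S` if it is incident to no chord of `S`. -/
def ChordFree (n : ℕ) (S : Set (Sym2 (ZMod n))) (v : ZMod n) : Prop :=
  ∀ e ∈ S, v ∉ e

/-- An outerplane graph on `n` vertices: a simple graph on `ZMod n` whose edge
set is the (disjoint) union of the standard `n`-cycle and a set of pairwise
non-crossing chords. -/
def IsOuterplane (n : ℕ) (G : SimpleGraph (ZMod n)) : Prop :=
  ∃ S : Set (Sym2 (ZMod n)), NonCrossingChords n S ∧
    G.edgeSet = {e | IsCycleEdge n e} ∪ S

/-- The multiset of vertex degrees of a graph on a finite vertex type. -/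
noncomputable def degMultiset {V : Type*} [Fintype V] (G : SimpleGraph V) : Multiset ℕ := by
  classical exact Finset.univ.val.map fun v => G.degree v

/-- The multiset of vertex degrees of a graph on `ZMod n` (junk value for `n = 0`). -/
noncomputable def degreeMultiset (n : ℕ) (G : SimpleGraph (ZMod n)) : Multiset ℕ :=
  if h : n = 0 then 0
  else by haveI : NeZero n := ⟨h⟩; exact degMultiset G

/-- `M` is outerplane-unigraphic on `n` vertices: there is an outerplane graph on
`n` vertices with degree multiset `M`, and any two such are isomorphic. -/
def OuterplaneUnigraphic (n : ℕ) (M : Multiset ℕ) : Prop :=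
  (∃ G : SimpleGraph (ZMod n), IsOuterplane n G ∧ degreeMultiset n G = M) ∧
  ∀ G G' : SimpleGraph (ZMod n), IsOuterplane n G → IsOuterplane n G' →
    degreeMultiset n G = M → degreeMultiset n G' = M → Nonempty (G ≃g G')

/-- A caterpillar: a connected acyclic graph (tree) in which all vertices of
degree at least two lie on a common path. -/
def IsCaterpillar {V : Type*} (G : SimpleGraph V) : Prop :=
  G.Connected ∧ G.IsAcyclic ∧
    ∃ (u w : V) (p : G.Walk u w), p.IsPath ∧
      ∀ v : V, (∃ a b : V, a ≠ b ∧ G.Adj v a ∧ G.Adj v b) → v ∈ p.support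

/-!
Every vertex of a polygon dissected by chords has degree two plus the number of chords at it, so
the degrees `3, 3, 2, 2, 2` force exactly one chord of the pentagon. All chords of the pentagon have
the form `{i, i + 2}`, hence any two of them, and the graphs they define, differ by a rotation.
-/

open SimpleGraph

theorem degree_sup_of_disjoint {V : Type*} {G H : SimpleGraph V} (hGH : Disjoint G H) (v : V)
    [Fintype (G.neighborSet v)] [Fintype (H.neighborSet v)] [Fintype ((G ⊔ H).neighborSet v)] :
    (G ⊔ H).degree v = G.degree v + H.degree v := by
  rw [degree, neighborFinset_sup_of_disjoint v hGH, Finset.card_disjUnion, degree, degree]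

theorem degree_circulantGraph_singleton {A : Type*} [AddGroup A] {g : A} (hg : g + g ≠ 0) (v : A)
    [Fintype ((circulantGraph {g}).neighborSet v)] : (circulantGraph {g}).degree v = 2 := by
  classical
  have neighborFinset_eq : (circulantGraph {g}).neighborFinset v = {-g + v, g + v} := by
    have g_ne_zero : g ≠ 0 := by rintro rfl; simp at hg
    ext w
    simp only [mem_neighborFinset, circulantGraph_adj, Set.mem_singleton_iff, Finset.mem_insert,
      Finset.mem_singleton, sub_eq_iff_eq_add, eq_neg_add_iff_add_eq, eq_comm (a := v) (b := g + w)]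
    refine and_iff_right_of_imp ?_
    rintro (h | h) rfl <;> simp [g_ne_zero] at h
  rw [degree, neighborFinset_eq, Finset.card_pair]
  exact fun h ↦ hg (neg_eq_iff_add_eq_zero.mp (add_right_cancel h))

variable {n : ℕ}

theorem degreeMultiset_eq_map_degree [NeZero n] (G : SimpleGraph (ZMod n)) [DecidableRel G.Adj] :
    degreeMultiset n G = Finset.univ.val.map fun v ↦ G.degree v := by
  rw [degreeMultiset, dif_neg (NeZero.ne n), degMultiset]
  congr!

/-- The standard `n`-cycle with the pairs in `S` added as edges; for a set `S` of pairwise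
non-crossing chords this is the outerplane graph they determine. The cycle is encoded as the
circulant graph with the single jump `1`. -/
def dissectedPolygon (n : ℕ) (S : Set (Sym2 (ZMod n))) : SimpleGraph (ZMod n) :=
  circulantGraph {1} ⊔ chordGraph n S

theorem edgeSet_circulantGraph_one [Nontrivial (ZMod n)] :
    (circulantGraph ({1} : Set (ZMod n))).edgeSet = {e | IsCycleEdge n e} := by
  ext e
  induction e with | _ a b
  simp only [mem_edgeSet, circulantGraph_adj, Set.mem_singleton_iff, Set.mem_ofPred_eq, IsCycleEdge]
  constructor
  · rintro ⟨-, h | h⟩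
    · exact ⟨b, by grind⟩
    · exact ⟨a, by grind⟩
  · rintro ⟨i, hi⟩
    have i_ne_succ : i ≠ i + 1 := by simp
    grind

theorem edgeSet_chordGraph {S : Set (Sym2 (ZMod n))} (hS : ∀ e ∈ S, IsChord n e) :
    (chordGraph n S).edgeSet = S := by
  rw [chordGraph, edgeSet_fromEdgeSet, sdiff_eq_left, Set.disjoint_left]
  exact fun e he ↦ (hS e he).1

theorem degree_chordGraph_singleton {e : Sym2 (ZMod n)} (he : ¬ e.IsDiag) (v : ZMod n)
    [Decidable (v ∈ e)] [Fintype ((chordGraph n {e}).neighborSet v)] :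
    (chordGraph n {e}).degree v = if v ∈ e then 1 else 0 := by
  split_ifs with hv
  · obtain ⟨w, rfl⟩ := Sym2.mem_iff_exists.mp hv
    refine degree_eq_one_iff_existsUnique_adj.mpr ⟨w, ?_, fun u hu ↦ ?_⟩
    · simpa [chordGraph] using he
    · exact Sym2.congr_right.mp hu.1
  · rw [degree_eq_zero]
    rintro w ⟨rfl, -⟩
    exact hv (Sym2.mem_mk_left v w)

theorem disjoint_circulantGraph_chordGraph [Nontrivial (ZMod n)] {S : Set (Sym2 (ZMod n))}
    (hS : ∀ e ∈ S, IsChord n e) : Disjoint (circulantGraph {1}) (chordGraph n S) := by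
  rw [← disjoint_edgeSet, edgeSet_circulantGraph_one, edgeSet_chordGraph hS, Set.disjoint_right]
  exact fun e he ↦ (hS e he).2

theorem edgeSet_dissectedPolygon [Nontrivial (ZMod n)] {S : Set (Sym2 (ZMod n))}
    (hS : ∀ e ∈ S, IsChord n e) :
    (dissectedPolygon n S).edgeSet = {e | IsCycleEdge n e} ∪ S := by
  rw [dissectedPolygon, edgeSet_sup, edgeSet_circulantGraph_one, edgeSet_chordGraph hS]

theorem isOuterplane_iff_exists_eq_dissectedPolygon [Nontrivial (ZMod n)]
    {G : SimpleGraph (ZMod n)} :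
    IsOuterplane n G ↔ ∃ S, NonCrossingChords n S ∧ G = dissectedPolygon n S :=
  exists_congr fun _ ↦ and_congr_right fun hS ↦ by
    rw [← edgeSet_dissectedPolygon hS.1, edgeSet_inj]

theorem nonCrossingChords_singleton {e : Sym2 (ZMod n)} (he : IsChord n e) :
    NonCrossingChords n {e} :=
  ⟨fun _ hf ↦ hf ▸ he, fun _ hf _ hg hfg ↦ absurd (hf.trans hg.symm) hfg⟩

/-- The rotation of the polygon by `t` steps, as an isomorphism from a dissected polygon to the
rotated one. -/
def dissectedPolygonRotate (S : Set (Sym2 (ZMod n))) (t : ZMod n) :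
    dissectedPolygon n S ≃g dissectedPolygon n (Sym2.map (· + t) '' S) where
  toEquiv := Equiv.addRight t
  map_rel_iff' {a b} := by
    have map_mem_image : s(a + t, b + t) ∈ Sym2.map (· + t) '' S ↔ s(a, b) ∈ S :=
      (Sym2.map.injective (add_left_injective t)).mem_set_image (a := s(a, b))
    simp [dissectedPolygon, chordGraph, map_mem_image]

theorem degree_dissectedPolygon (hn : 3 ≤ n) {S : Set (Sym2 (ZMod n))}
    (hS : ∀ e ∈ S, IsChord n e) (v : ZMod n)
    [Fintype ((chordGraph n S).neighborSet v)] [Fintype ((dissectedPolygon n S).neighborSet v)] :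
    (dissectedPolygon n S).degree v = 2 + (chordGraph n S).degree v := by
  classical
  have : NeZero n := ⟨by omega⟩
  have : Fact (1 < n) := ⟨by omega⟩
  have one_add_one_ne_zero : (1 + 1 : ZMod n) ≠ 0 := by
    rw [one_add_one_eq_two]
    exact_mod_cast (ZMod.natCast_eq_zero_iff 2 n).not.mpr fun h ↦ by
      have := Nat.le_of_dvd two_pos h
      omega
  rw [← degree_circulantGraph_singleton one_add_one_ne_zero v]
  convert degree_sup_of_disjoint (disjoint_circulantGraph_chordGraph hS) v
  rfl

theorem sum_degreeMultiset_dissectedPolygon (hn : 3 ≤ n) {S : Set (Sym2 (ZMod n))}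
    (hS : ∀ e ∈ S, IsChord n e) :
    (degreeMultiset n (dissectedPolygon n S)).sum = 2 * (n + S.ncard) := by
  classical
  have : NeZero n := ⟨by omega⟩
  have sum_degree_chordGraph : ∑ v, (chordGraph n S).degree v = 2 * S.ncard := by
    rw [sum_degrees_eq_twice_card_edges, ← Set.ncard_coe_finset, coe_edgeFinset,
      edgeSet_chordGraph hS]
  calc (degreeMultiset n (dissectedPolygon n S)).sum
      = ∑ v, (dissectedPolygon n S).degree v := by rw [degreeMultiset_eq_map_degree]; rfl
    _ = ∑ v, (2 + (chordGraph n S).degree v) :=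
      Finset.sum_congr rfl fun v _ ↦ degree_dissectedPolygon hn hS v
    _ = 2 * (n + S.ncard) := by
      rw [Finset.sum_add_distrib, sum_degree_chordGraph, Finset.sum_const, Finset.card_univ,
        ZMod.card, smul_eq_mul]
      ring

theorem degreeMultiset_dissectedPolygon_singleton (hn : 3 ≤ n) {e : Sym2 (ZMod n)}
    (he : IsChord n e) :
    degreeMultiset n (dissectedPolygon n {e}) =
      Multiset.replicate 2 3 + Multiset.replicate (n - 2) 2 := by
  classical
  have : NeZero n := ⟨by omega⟩
  have degree_eq (v : ZMod n) :
      (dissectedPolygon n {e}).degree v = 2 + if v ∈ e then 1 else 0 := by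
    rw [degree_dissectedPolygon hn (nonCrossingChords_singleton he).1,
      degree_chordGraph_singleton he.1]
  have card_ends : (Finset.univ.filter (· ∈ e)).card = 2 := by
    rw [← Sym2.card_toFinset_of_not_isDiag e he.1]
    congr 1
    ext
    simp
  have card_others : (Finset.univ.filter (· ∉ e)).card = n - 2 := by
    rw [← Finset.compl_filter, Finset.card_compl, card_ends, ZMod.card]
  have degrees_ends : (Finset.univ.val.filter (· ∈ e)).map
      (fun v ↦ (dissectedPolygon n {e}).degree v) = .replicate 2 3 :=
    Multiset.eq_replicate.mpr
      ⟨(Multiset.card_map _ _).trans card_ends, by simp +contextual [degree_eq]⟩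
  have degrees_others : (Finset.univ.val.filter (· ∉ e)).map
      (fun v ↦ (dissectedPolygon n {e}).degree v) = .replicate (n - 2) 2 :=
    Multiset.eq_replicate.mpr
      ⟨(Multiset.card_map _ _).trans card_others, by simp +contextual [degree_eq]⟩
  rw [degreeMultiset_eq_map_degree, ← degrees_ends, ← degrees_others, ← Multiset.map_add,
    Multiset.filter_add_not]

theorem IsOuterplane.exists_eq_dissectedPolygon_singleton (hn : 3 ≤ n) {G : SimpleGraph (ZMod n)}
    (hG : IsOuterplane n G) (hsum : (degreeMultiset n G).sum = 2 * (n + 1)) :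
    ∃ e, IsChord n e ∧ G = dissectedPolygon n {e} := by
  have : Fact (1 < n) := ⟨by omega⟩
  obtain ⟨S, hS, rfl⟩ := isOuterplane_iff_exists_eq_dissectedPolygon.mp hG
  have ncard_eq_one : S.ncard = 1 := by
    rw [sum_degreeMultiset_dissectedPolygon hn hS.1] at hsum
    omega
  obtain ⟨e, rfl⟩ := Set.ncard_eq_one.mp ncard_eq_one
  exact ⟨e, hS.1 e rfl, rfl⟩

theorem outerplaneUnigraphic_of_forall_isChord_eq_map_add (hn : 3 ≤ n) {e : Sym2 (ZMod n)}
    (he : IsChord n e) (hrot : ∀ f, IsChord n f → ∃ t, f = e.map (· + t)) :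
    OuterplaneUnigraphic n (Multiset.replicate 2 3 + Multiset.replicate (n - 2) 2) := by
  have : Fact (1 < n) := ⟨by omega⟩
  have iso_of_degrees (G : SimpleGraph (ZMod n)) (hG : IsOuterplane n G)
      (hdeg : degreeMultiset n G = Multiset.replicate 2 3 + Multiset.replicate (n - 2) 2) :
      Nonempty (dissectedPolygon n {e} ≃g G) := by
    have hsum : (degreeMultiset n G).sum = 2 * (n + 1) := by
      simp only [hdeg, Multiset.sum_add, Multiset.sum_replicate, smul_eq_mul]
      omega
    obtain ⟨f, hf, rfl⟩ := hG.exists_eq_dissectedPolygon_singleton hn hsum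
    obtain ⟨t, rfl⟩ := hrot f hf
    exact ⟨Set.image_singleton ▸ dissectedPolygonRotate {e} t⟩
  refine ⟨⟨dissectedPolygon n {e}, ?_, degreeMultiset_dissectedPolygon_singleton hn he⟩, ?_⟩
  · exact isOuterplane_iff_exists_eq_dissectedPolygon.mpr
      ⟨{e}, nonCrossingChords_singleton he, rfl⟩
  · intro G G' hG hG' hdeg hdeg'
    obtain ⟨φ⟩ := iso_of_degrees G hG hdeg
    obtain ⟨φ'⟩ := iso_of_degrees G' hG' hdeg'
    exact ⟨φ.symm.trans φ'⟩

theorem isChord_five_iff {e : Sym2 (ZMod 5)} : IsChord 5 e ↔ ∃ i, e = s(i, i + 2) := by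
  unfold IsChord IsCycleEdge
  revert e
  decide

/-- The exceptional unigraphic sequence `5, 4^2, 3^3` of the paper's Theorem 2:
the multiset `{3, 3, 2, 2, 2}` is outerplane-unigraphic on `5` vertices. -/
theorem unigraphic_exceptional_five :
    OuterplaneUnigraphic 5 ({3, 3, 2, 2, 2} : Multiset ℕ) := by
  have degrees_eq : ({3, 3, 2, 2, 2} : Multiset ℕ) =
    Multiset.replicate 2 3 + Multiset.replicate (5 - 2) 2 := rfl
  rw [degrees_eq]
  refine outerplaneUnigraphic_of_forall_isChord_eq_map_add (e := s(0, 2)) (by norm_num)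
    (isChord_five_iff.mpr ⟨0, rfl⟩) fun f hf ↦ ?_
  obtain ⟨i, rfl⟩ := isChord_five_iff.mp hf
  exact ⟨i, by simp [add_comm]⟩
end

section
/- The multiset {4, 4, 4, 2, 2, 2} is outerplane-unigraphic on n = 6 vertices: there exists an outerplane graph on 6 vertices with degree multiset {4, 4, 4, 2, 2, 2} (the hexagon together with the three alternating chords forming a triangle), and any two outerplane graphs on 6 vertices with this degree multiset are isomorphic. (This is the exceptional unigraphic polytope degree sequence 6, 5^3, 3^3 of the paper's Theorem 2.) -/
/-!
Let `G` contain the `2k`-cycle and have `k` vertices of degree `k + 1` and `k` of degree `2`, where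
`2 ≤ k`. Off the cycle, the former `k` vertices have degree `k - 1` and the latter are isolated, so
the chords form a complete graph on the set `T` of the former. As chords join no cyclically
consecutive vertices, `T` contains no two of them; having half of all vertices, it alternates around
the cycle. Any two alternating sets differ by a rotation, and so do the corresponding graphs. For
`k = 3` the chords form a triangle, and they do not cross because any two of them share an
endpoint.
-/

section Graphs

variable {V : Type*}

/-- The complete graph on the vertices in `T`, all other vertices being isolated. -/
def completeOn (T : Finset V) : SimpleGraph V where
  Adj a b := a ≠ b ∧ a ∈ T ∧ b ∈ T
  symm := ⟨fun _ _ h => ⟨h.1.symm, h.2.2, h.2.1⟩⟩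
  loopless := ⟨fun _ h => h.1 rfl⟩

instance [DecidableEq V] (T : Finset V) : DecidableRel (completeOn T).Adj :=
  fun a b => inferInstanceAs (Decidable (a ≠ b ∧ a ∈ T ∧ b ∈ T))

theorem exists_mem_inter_of_mem_edgeSet_completeOn {T : Finset V} (hT : T.card ≤ 3)
    {e f : Sym2 V} (he : e ∈ (completeOn T).edgeSet) (hf : f ∈ (completeOn T).edgeSet) :
    ∃ v, v ∈ e ∧ v ∈ f := by
  classical
  induction e using Sym2.ind with | _ a b
  induction f using Sym2.ind with | _ c d
  obtain ⟨hab, ha, hb⟩ := he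
  obtain ⟨hcd, hc, hd⟩ := hf
  by_contra! hdisj
  have hac : a ≠ c ∧ a ≠ d := by simpa using hdisj a
  have hbc : b ≠ c ∧ b ≠ d := by simpa using hdisj b
  have hcard : ({a, b, c, d} : Finset V).card = 4 := by
    simp [Finset.card_insert_of_notMem, *]
  have hsub : ({a, b, c, d} : Finset V) ⊆ T := by
    simp [Finset.insert_subset_iff, *]
  have := Finset.card_le_card hsub
  omega

variable [Fintype V]

theorem degree_sdiff_add_degree {G H : SimpleGraph V} [DecidableRel G.Adj] [DecidableRel H.Adj]
    [DecidableRel (G \ H).Adj] (hHG : H ≤ G) (v : V) :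
    (G \ H).degree v + H.degree v = G.degree v := by
  classical
  have hsub : H.neighborFinset v ⊆ G.neighborFinset v := fun w => by
    simpa using fun h : H.Adj v w => hHG h
  simp only [← SimpleGraph.card_neighborFinset_eq_degree, SimpleGraph.neighborFinset_sdiff]
  exact Finset.card_sdiff_add_card_eq_card hsub

theorem eq_completeOn_of_degree {H : SimpleGraph V} [DecidableRel H.Adj] {T : Finset V}
    (hT : ∀ v ∈ T, H.degree v + 1 = T.card) (hTc : ∀ v ∉ T, H.degree v = 0) :
    H = completeOn T := by
  classical
  have mem_of_adj {a b : V} (h : H.Adj a b) : a ∈ T := by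
    by_contra ha
    exact (H.degree_pos_iff_exists_adj a).2 ⟨b, h⟩ |>.ne' (hTc a ha)
  have neighborFinset_eq {a : V} (ha : a ∈ T) : H.neighborFinset a = T.erase a := by
    refine Finset.eq_of_subset_of_card_le (fun b hb => ?_) ?_
    · have hab : H.Adj a b := by simpa using hb
      exact Finset.mem_erase.2 ⟨hab.ne', mem_of_adj hab.symm⟩
    · rw [Finset.card_erase_of_mem ha, ← hT a ha, SimpleGraph.card_neighborFinset_eq_degree,
        Nat.add_sub_cancel]
  ext a b
  constructor
  · exact fun h => ⟨h.ne, mem_of_adj h, mem_of_adj h.symm⟩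
  · rintro ⟨hne, ha, hb⟩
    rw [← SimpleGraph.mem_neighborFinset, neighborFinset_eq ha]
    exact Finset.mem_erase.2 ⟨hne.symm, hb⟩

end Graphs

section DegreeMultiset

variable {n : ℕ}

theorem degreeMultiset_eq_map [NeZero n] (G : SimpleGraph (ZMod n)) [DecidableRel G.Adj] :
    degreeMultiset n G = Finset.univ.val.map fun v => G.degree v := by
  rw [degreeMultiset, dif_neg (NeZero.ne n), degMultiset]
  congr!

theorem card_degreeMultiset (G : SimpleGraph (ZMod n)) : (degreeMultiset n G).card = n := by
  classical
  rcases eq_or_ne n 0 with rfl | hn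
  · rfl
  · have : NeZero n := ⟨hn⟩
    simp [degreeMultiset_eq_map]

theorem exists_finset_of_degreeMultiset_eq_replicate_add_replicate [NeZero n]
    {G : SimpleGraph (ZMod n)} [DecidableRel G.Adj] {k l a b : ℕ} (hab : a ≠ b)
    (hdeg : degreeMultiset n G = Multiset.replicate k a + Multiset.replicate l b) :
    ∃ T : Finset (ZMod n), T.card = k ∧ (∀ v ∈ T, G.degree v = a) ∧ ∀ v ∉ T, G.degree v = b := by
  rw [degreeMultiset_eq_map] at hdeg
  refine ⟨Finset.univ.filter fun v => a = G.degree v, ?_, fun v hv => ?_, fun v hv => ?_⟩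
  · have hcount := congrArg (Multiset.count a) hdeg
    rw [Multiset.count_map, ← Finset.filter_val, Finset.card_val] at hcount
    simpa [Multiset.count_replicate, hab.symm] using hcount
  · simpa [eq_comm] using hv
  · have hmem : G.degree v ∈ Multiset.replicate k a + Multiset.replicate l b :=
      hdeg ▸ Multiset.mem_map_of_mem _ (Finset.mem_univ v)
    have hne : a ≠ G.degree v := by simpa using hv
    simp only [Multiset.mem_add, Multiset.mem_replicate] at hmem
    exact (hmem.resolve_left fun h => hne h.2.symm).2

end DegreeMultiset

section Crossing

variable {n : ℕ}

theorem not_between_left {a b : ZMod n} : ¬ Between n a b a := by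
  simp [Between]

theorem not_between_right {a b : ZMod n} : ¬ Between n a b b := by
  simp [Between]

variable [NeZero n]

theorem Between.not_swap {a b v : ZMod n} (h : Between n a b v) : ¬ Between n b a v := by
  rintro ⟨-, hlt⟩
  have hab : NeZero (b - a) := ⟨fun h0 => by simp [Between, h0] at h⟩
  have hval : (a - b).val = n - (b - a).val := by
    rw [← neg_sub, ZMod.val_neg_of_ne_zero]
  have hadd : (v - a).val = (v - b).val + (b - a).val := by
    rw [← ZMod.val_add_of_lt (by omega), sub_add_sub_cancel]
  have := h.2
  omega

theorem not_cross_of_mem_of_mem {e f : Sym2 (ZMod n)} {v : ZMod n} (he : v ∈ e) (hf : v ∈ f) :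
    ¬ Cross n e f := by
  obtain ⟨b, rfl⟩ := he
  obtain ⟨d, rfl⟩ := hf
  intro hcross
  have hforward : Between n v b d :=
    ((hcross v b v d rfl rfl).resolve_left fun h => not_between_left h.1).1
  have hbackward : Between n b v d :=
    ((hcross b v v d Sym2.eq_swap rfl).resolve_left fun h => not_between_right h.1).1
  exact hforward.not_swap hbackward

end Crossing

section StandardCycle

variable {n : ℕ}

/-- The standard `n`-cycle as a graph. For `n = 1` it has no edges, although `IsCycleEdge 1` holds
of the loop. -/
abbrev standardCycle (n : ℕ) : SimpleGraph (ZMod n) :=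
  SimpleGraph.circulantGraph {1}

theorem edgeSet_standardCycle (hn : 1 < n) :
    (standardCycle n).edgeSet = {e | IsCycleEdge n e} := by
  have : Fact (1 < n) := ⟨hn⟩
  ext e
  induction e using Sym2.ind with | _ a b
  simp only [SimpleGraph.mem_edgeSet, SimpleGraph.circulantGraph_adj, Set.mem_singleton_iff,
    Set.mem_ofPred_eq, IsCycleEdge, Sym2.eq_iff]
  constructor
  · rintro ⟨-, h | h⟩
    · exact ⟨b, Or.inr ⟨by rw [← h]; ring, rfl⟩⟩
    · exact ⟨a, Or.inl ⟨rfl, by rw [← h]; ring⟩⟩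
  · rintro ⟨i, ⟨rfl, rfl⟩ | ⟨rfl, rfl⟩⟩ <;> simp

theorem IsOuterplane.standardCycle_le {G : SimpleGraph (ZMod n)} (hn : 1 < n)
    (hG : IsOuterplane n G) : standardCycle n ≤ G := by
  obtain ⟨S, -, hE⟩ := hG
  rw [← SimpleGraph.edgeSet_subset_edgeSet, edgeSet_standardCycle hn, hE]
  exact Set.subset_union_left

theorem degree_standardCycle [NeZero n] (hn : 2 < n) (v : ZMod n) :
    (standardCycle n).degree v = 2 := by
  have : Fact (1 < n) := ⟨by omega⟩
  have : Fact (2 < n) := ⟨hn⟩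
  have hnbr : (standardCycle n).neighborFinset v = {v - 1, v + 1} := by
    ext w
    simp only [SimpleGraph.mem_neighborFinset, SimpleGraph.circulantGraph_adj,
      Set.mem_singleton_iff, Finset.mem_insert, Finset.mem_singleton]
    constructor
    · grind
    · rintro (rfl | rfl) <;> simp [eq_sub_iff_add_eq]
  have hne : v - 1 ≠ v + 1 := by
    intro h
    exact ZMod.neg_one_ne_one (by linear_combination h)
  rw [← SimpleGraph.card_neighborFinset_eq_degree, hnbr, Finset.card_pair hne]

end StandardCycle

section CycleWithClique

variable {n : ℕ}

/-- The standard `n`-cycle together with all edges between the vertices in `T`. -/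
abbrev cycleWithClique (T : Finset (ZMod n)) : SimpleGraph (ZMod n) :=
  standardCycle n ⊔ completeOn T

theorem isOuterplane_cycleWithClique (hn : 1 < n) {T : Finset (ZMod n)} (hT : T.card ≤ 3) :
    IsOuterplane n (cycleWithClique T) := by
  have : NeZero n := ⟨by omega⟩
  refine ⟨(completeOn T).edgeSet \ {e | IsCycleEdge n e}, ⟨?_, ?_⟩, ?_⟩
  · exact fun e he => ⟨SimpleGraph.not_isDiag_of_mem_edgeSet _ he.1, he.2⟩
  · intro e he f hf _
    obtain ⟨v, hve, hvf⟩ := exists_mem_inter_of_mem_edgeSet_completeOn hT he.1 hf.1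
    exact not_cross_of_mem_of_mem hve hvf
  · rw [SimpleGraph.edgeSet_sup, edgeSet_standardCycle hn, Set.union_sdiff_self]

/-- Rotation by `c` as a graph isomorphism. -/
def cycleWithCliqueIsoTranslate (T : Finset (ZMod n)) (c : ZMod n) :
    cycleWithClique T ≃g cycleWithClique (T.map (Equiv.addRight c).toEmbedding) where
  toEquiv := Equiv.addRight c
  map_rel_iff' := by simp [completeOn]

end CycleWithClique

section Alternating

variable {n : ℕ}

/-- `T` alternates around the cycle: exactly one of any two consecutive vertices lies in it. -/
def IsAlternating (T : Finset (ZMod n)) : Prop :=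
  ∀ v, v + 1 ∈ T ↔ v ∉ T

theorem IsAlternating.nonempty {T : Finset (ZMod n)} (hT : IsAlternating T) : T.Nonempty := by
  by_cases h : (0 : ZMod n) ∈ T
  · exact ⟨0, h⟩
  · exact ⟨0 + 1, (hT 0).2 h⟩

theorem IsAlternating.translate {T : Finset (ZMod n)} (hT : IsAlternating T) (c : ZMod n) :
    IsAlternating (T.map (Equiv.addRight c).toEmbedding) := by
  intro v
  simpa [Finset.mem_map_equiv, sub_eq_add_neg, add_right_comm] using hT (v - c)

theorem IsAlternating.add_natCast_mem_iff {T : Finset (ZMod n)} (hT : IsAlternating T)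
    {v : ZMod n} (hv : v ∈ T) (k : ℕ) : v + k ∈ T ↔ Even k := by
  induction k with
  | zero => simpa
  | succ k ih => rw [Nat.cast_succ, ← add_assoc, hT, ih, Nat.even_add_one]

variable [NeZero n]

theorem isAlternating_of_add_one_notMem {T : Finset (ZMod n)} (hcard : 2 * T.card = n)
    (hT : ∀ v ∈ T, v + 1 ∉ T) : IsAlternating T := by
  let S := T.map (Equiv.addRight (1 : ZMod n)).toEmbedding
  have hsub : S ⊆ Tᶜ := by
    intro w hw
    obtain ⟨v, hv, rfl⟩ := Finset.mem_map.1 hw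
    exact Finset.mem_compl.2 (hT v hv)
  have heq : S = Tᶜ := by
    refine Finset.eq_of_subset_of_card_le hsub ?_
    rw [Finset.card_compl, ZMod.card, Finset.card_map]
    omega
  intro v
  constructor
  · exact fun h hv => hT v hv h
  · intro hv
    by_contra h
    have hmem : v + 1 ∈ S := heq ▸ Finset.mem_compl.2 h
    exact hv (by simpa [S] using hmem)

theorem IsAlternating.eq_of_mem_of_mem {T T' : Finset (ZMod n)} (hT : IsAlternating T)
    (hT' : IsAlternating T') {v : ZMod n} (hv : v ∈ T) (hv' : v ∈ T') : T = T' := by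
  ext w
  have hw : w = v + ((w - v).val : ℕ) := by simp
  rw [hw, hT.add_natCast_mem_iff hv, hT'.add_natCast_mem_iff hv']

theorem IsAlternating.nonempty_iso_cycleWithClique {T T' : Finset (ZMod n)}
    (hT : IsAlternating T) (hT' : IsAlternating T') :
    Nonempty (cycleWithClique T ≃g cycleWithClique T') := by
  obtain ⟨t, ht⟩ := hT.nonempty
  obtain ⟨t', ht'⟩ := hT'.nonempty
  have hmem : t' ∈ T.map (Equiv.addRight (t' - t)).toEmbedding :=
    Finset.mem_map.2 ⟨t, ht, by simp⟩
  rw [← (hT.translate (t' - t)).eq_of_mem_of_mem hT' hmem ht']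
  exact ⟨cycleWithCliqueIsoTranslate T (t' - t)⟩

end Alternating

section Uniqueness

variable {n k : ℕ} {G G' : SimpleGraph (ZMod n)}

theorem exists_isAlternating_eq_cycleWithClique (hk : 2 ≤ k) (hG : standardCycle n ≤ G)
    (hdeg : degreeMultiset n G = Multiset.replicate k (k + 1) + Multiset.replicate k 2) :
    ∃ T : Finset (ZMod n), IsAlternating T ∧ G = cycleWithClique T := by
  classical
  have hn : n = 2 * k := by
    rw [← card_degreeMultiset G, hdeg]
    simp [two_mul]
  have : NeZero n := ⟨by omega⟩
  obtain ⟨T, hTcard, hdegOn, hdegOff⟩ :=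
    exists_finset_of_degreeMultiset_eq_replicate_add_replicate (by omega) hdeg
  have hchordDeg (v : ZMod n) : (G \ standardCycle n).degree v + 2 = G.degree v := by
    rw [← degree_sdiff_add_degree hG v, degree_standardCycle (by omega)]
  have hchords : G \ standardCycle n = completeOn T := by
    refine eq_completeOn_of_degree (fun v hv => ?_) fun v hv => ?_
    · have := hchordDeg v
      have := hdegOn v hv
      omega
    · have := hchordDeg v
      have := hdegOff v hv
      omega
  refine ⟨T, isAlternating_of_add_one_notMem (by omega) fun v hv hv1 => ?_, ?_⟩
  · have : Fact (1 < n) := ⟨by omega⟩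
    have hchord : (G \ standardCycle n).Adj v (v + 1) := hchords ▸ ⟨by simp, hv, hv1⟩
    exact hchord.2 (by simp)
  · rw [cycleWithClique, ← hchords, sup_sdiff_cancel_right hG]

theorem nonempty_iso_of_degreeMultiset_eq (hk : 2 ≤ k) (hG : standardCycle n ≤ G)
    (hG' : standardCycle n ≤ G')
    (hdeg : degreeMultiset n G = Multiset.replicate k (k + 1) + Multiset.replicate k 2)
    (hdeg' : degreeMultiset n G' = Multiset.replicate k (k + 1) + Multiset.replicate k 2) :
    Nonempty (G ≃g G') := by
  have hn : n = 2 * k := by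
    rw [← card_degreeMultiset G, hdeg]
    simp [two_mul]
  have : NeZero n := ⟨by omega⟩
  obtain ⟨T, hT, rfl⟩ := exists_isAlternating_eq_cycleWithClique hk hG hdeg
  obtain ⟨T', hT', rfl⟩ := exists_isAlternating_eq_cycleWithClique hk hG' hdeg'
  exact hT.nonempty_iso_cycleWithClique hT'

end Uniqueness

theorem degreeMultiset_cycleWithClique_zero_two_four :
    degreeMultiset 6 (cycleWithClique {0, 2, 4}) = {4, 4, 4, 2, 2, 2} := by
  rw [degreeMultiset_eq_map]
  decide

theorem unigraphic_exceptional_six_general :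
    (∃ G : SimpleGraph (ZMod 6), IsOuterplane 6 G ∧
      degreeMultiset 6 G = ({4, 4, 4, 2, 2, 2} : Multiset ℕ)) ∧
    ∀ G G' : SimpleGraph (ZMod 6), standardCycle 6 ≤ G → standardCycle 6 ≤ G' →
      degreeMultiset 6 G = ({4, 4, 4, 2, 2, 2} : Multiset ℕ) →
      degreeMultiset 6 G' = ({4, 4, 4, 2, 2, 2} : Multiset ℕ) → Nonempty (G ≃g G') := by
  refine ⟨⟨cycleWithClique {0, 2, 4}, ?_, degreeMultiset_cycleWithClique_zero_two_four⟩, ?_⟩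
  · exact isOuterplane_cycleWithClique (by norm_num) Finset.card_le_three
  · exact fun G G' hG hG' => nonempty_iso_of_degreeMultiset_eq (k := 3) (by norm_num) hG hG'

/-- The exceptional unigraphic sequence `6, 5^3, 3^3` of the paper's Theorem 2:
the multiset `{4, 4, 4, 2, 2, 2}` is outerplane-unigraphic on `6` vertices. -/
theorem unigraphic_exceptional_six :
    OuterplaneUnigraphic 6 ({4, 4, 4, 2, 2, 2} : Multiset ℕ) :=
  unigraphic_exceptional_six_general.imp_right fun huniq G G' hG hG' =>
    huniq G G' (hG.standardCycle_le (by norm_num)) (hG'.standardCycle_le (by norm_num))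
end

section
/- Let n ≥ 3, let S be a set of pairwise non-crossing chords of the standard n-cycle, and suppose the chord graph of S contains a cycle of length i (i ≥ 3). Then at least i vertices of ZMod n are chord-free for S. (This is the single-block case of the paper's Lemma 2: if the chord graph of a radius-1 3-polytope contains an i-cycle, the polytope has at least i vertices of degree three.) -/
/-!
Fix an edge `s(a, b)` of the cycle `c`. The rest of `c` is a path from `b` to `a`, and none of its
edges crosses `s(a, b)`, so all other vertices of `c` lie on one side of `s(a, b)`. The open arc on
the other side contains a chord-free vertex: if `a + 1` is not chord-free, a chord leaving it cuts
off a strictly smaller arc, and one repeats the argument there. The arcs cut off in this way by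
distinct edges of `c` are disjoint, so these chord-free vertices are distinct.
-/

section CircularOrder

variable {α : Type*} [CircularOrder α] {a b a' b' v z : α}

theorem sbtw_or_sbtw_of_ne (hab : a ≠ b) (hva : v ≠ a) (hvb : v ≠ b) :
    sbtw a v b ∨ sbtw b v a := by
  by_contra! h
  obtain ⟨hab_not, hba_not⟩ := h
  rcases (btw_iff_not_sbtw.2 hba_not).antisymm (btw_iff_not_sbtw.2 hab_not) with h | h | h
  · exact hva h.symm
  · exact hvb h
  · exact hab h.symm

theorem sbtw_swap_iff_not_sbtw (hab : a ≠ b) (hva : v ≠ a) (hvb : v ≠ b) :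
    sbtw b v a ↔ ¬ sbtw a v b :=
  ⟨sbtw_asymm, (sbtw_or_sbtw_of_ne hab hva hvb).resolve_left⟩

theorem left_eq_of_sbtw_of_not_sbtw (h : sbtw a z b) (h' : sbtw a' z b')
    (ha' : ¬ sbtw a a' b) (ha : ¬ sbtw a' a b') : a = a' := by
  by_contra hne
  have haz : a ≠ z := by rintro rfl; exact sbtw_irrefl_left h
  have haz' : a' ≠ z := by rintro rfl; exact sbtw_irrefl_left h'
  rcases sbtw_or_sbtw_of_ne haz (Ne.symm hne) haz' with hlt | hlt
  · exact ha' (sbtw_trans_right hlt h)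
  · exact ha (sbtw_trans_right hlt.cyclic_left h')

theorem right_eq_of_sbtw_of_not_sbtw (h : sbtw a z b) (h' : sbtw a' z b')
    (hb' : ¬ sbtw a b' b) (hb : ¬ sbtw a' b b') : b = b' := by
  by_contra hne
  have hzb : z ≠ b := by rintro rfl; exact sbtw_irrefl_right h
  have hzb' : b' ≠ z := by rintro rfl; exact sbtw_irrefl_right h'
  rcases sbtw_or_sbtw_of_ne hzb hzb' (Ne.symm hne) with hlt | hlt
  · exact hb' (h.trans_left hlt)
  · exact hb (h'.trans_left hlt.cyclic_right)

/-- `z` is cut off from the set `X` by the pair `e`: it lies on an open arc between the two points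
of `e` that contains no point of `X`. When `X` is the vertex set of a polygon and `e` is a side of
it, these are the points beyond that side. -/
def IsCutOff (X : Set α) (e : Sym2 α) (z : α) : Prop :=
  ∃ a b, e = s(a, b) ∧ sbtw a z b ∧ ∀ w ∈ X, ¬ sbtw a w b

theorem IsCutOff.pair_unique {X : Set α} {e e' : Sym2 α} (h : IsCutOff X e z)
    (h' : IsCutOff X e' z) (he : ∀ x ∈ e, x ∈ X) (he' : ∀ x ∈ e', x ∈ X) : e = e' := by
  obtain ⟨a, b, rfl, hz, hX⟩ := h
  obtain ⟨a', b', rfl, hz', hX'⟩ := h'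
  rw [Sym2.ball] at he he'
  rw [left_eq_of_sbtw_of_not_sbtw hz hz' (hX _ he'.1) (hX' _ he.1),
    right_eq_of_sbtw_of_not_sbtw hz hz' (hX _ he'.2) (hX' _ he.2)]

end CircularOrder

section Cycle

open SimpleGraph

variable {V : Type*} {G : SimpleGraph V} {u a b : V}

theorem eq_snd_or_eq_penultimate_of_isCycle {c : G.Walk u u} (hc : c.IsCycle)
    (h : s(u, b) ∈ c.edges) : b = c.snd ∨ b = c.penultimate := by
  have : b ∈ c.toSubgraph.neighborSet u := c.adj_toSubgraph_iff_mem_edges.2 h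
  rwa [hc.neighborSet_toSubgraph_endpoint] at this

theorem exists_isPath_of_isCycle_of_mem_edges {c : G.Walk u u} (hc : c.IsCycle)
    (h : s(a, b) ∈ c.edges) : ∃ p : G.Walk b a, p.IsPath ∧ c.support ⊆ p.support := by
  classical
  have ha : a ∈ c.support := c.fst_mem_support_of_mem_edges h
  have hrot : (c.rotate a ha).IsCycle := hc.rotate ha
  have hsub : c.support ⊆ (c.rotate a ha).support := fun _ => (c.mem_support_rotate_iff a ha).2
  rw [← (c.rotate_edges a ha).mem_iff] at h
  rcases eq_snd_or_eq_penultimate_of_isCycle hrot h with rfl | rfl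
  · refine ⟨_, hrot.isPath_tail, List.Subset.trans hsub ?_⟩
    rw [← Walk.cons_support_tail hrot.not_nil]
    exact List.cons_subset.2 ⟨Walk.end_mem_support _, List.Subset.refl _⟩
  · refine ⟨_, hrot.isPath_dropLast.reverse, List.Subset.trans hsub ?_⟩
    rw [← Walk.support_dropLast_concat hrot.not_nil, Walk.support_reverse]
    simp

end Cycle

section ZMod

variable {n : ℕ} [NeZero n] {a b v : ZMod n}

theorem val_sub_eq_ite (a b : ZMod n) :
    (a - b).val = if b.val ≤ a.val then a.val - b.val else n + a.val - b.val := by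
  split_ifs with h
  · exact ZMod.val_sub h
  · obtain ⟨m, rfl⟩ := Nat.exists_eq_succ_of_ne_zero (NeZero.ne n)
    exact Fin.coe_sub_iff_lt.2 (not_le.1 h)

theorem sbtw_iff_val_lt_val : sbtw a v b ↔
    a.val < v.val ∧ v.val < b.val ∨ v.val < b.val ∧ b.val < a.val ∨
      b.val < a.val ∧ a.val < v.val := by
  obtain ⟨m, rfl⟩ := Nat.exists_eq_succ_of_ne_zero (NeZero.ne n)
  exact Fin.sbtw_iff

theorem between_iff_sbtw : Between n a b v ↔ sbtw a v b := by
  have ha := a.val_lt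
  have hb := b.val_lt
  have hv := v.val_lt
  rw [Between, sbtw_iff_val_lt_val, val_sub_eq_ite, val_sub_eq_ite]
  split_ifs <;> omega

theorem sbtw_add_one (hab : a ≠ b) (hb : a + 1 ≠ b) : sbtw a (a + 1) b := by
  have : Fact (1 < n) := ⟨by
    by_contra h
    obtain rfl : n = 1 := by have := NeZero.ne n; omega
    exact hab (Subsingleton.elim a b)⟩
  have hval_zero : (b - a).val ≠ 0 := by
    rwa [Ne, ZMod.val_eq_zero, sub_eq_zero, eq_comm]
  have hval_one : (b - a).val ≠ 1 := by
    rwa [Ne, ZMod.val_eq_one Fact.out, sub_eq_iff_eq_add', eq_comm]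
  rw [← between_iff_sbtw, Between, add_sub_cancel_left, ZMod.val_one]
  omega

end ZMod

section NonCrossingChords

variable {n : ℕ} {S : Set (Sym2 (ZMod n))}

theorem mem_of_chordGraph_adj {a b : ZMod n} (h : (chordGraph n S).Adj a b) : s(a, b) ∈ S :=
  ((SimpleGraph.fromEdgeSet_adj S).1 h).1

namespace NonCrossingChords

variable {a b c d x y : ZMod n}

theorem ne (hS : NonCrossingChords n S) (hab : s(a, b) ∈ S) : a ≠ b := (hS.1 _ hab).1

theorem add_one_ne (hS : NonCrossingChords n S) (hab : s(a, b) ∈ S) : a + 1 ≠ b := by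
  rintro rfl
  exact (hS.1 _ hab).2 ⟨a, rfl⟩

variable [NeZero n]

theorem sbtw_iff_sbtw (hS : NonCrossingChords n S) (hab : s(a, b) ∈ S) (hcd : s(c, d) ∈ S)
    (hca : c ≠ a) (hcb : c ≠ b) (hda : d ≠ a) (hdb : d ≠ b) : sbtw a c b ↔ sbtw a d b := by
  have hne : s(a, b) ≠ s(c, d) := by
    intro h
    have hc : c ∈ s(a, b) := h ▸ Sym2.mem_mk_left c d
    simp only [Sym2.mem_iff, hca, hcb, or_self] at hc
  have hc_swap := sbtw_swap_iff_not_sbtw (hS.ne hab) hca hcb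
  have hd_swap := sbtw_swap_iff_not_sbtw (hS.ne hab) hda hdb
  by_contra hxor
  refine hS.2 _ hab _ hcd hne fun a' b' c' d' hab' hcd' => ?_
  rw [between_iff_sbtw, between_iff_sbtw]
  refine (xor_iff_not_iff _ _).2 ?_
  rw [Sym2.eq_iff] at hab' hcd'
  rcases hab' with ⟨rfl, rfl⟩ | ⟨rfl, rfl⟩ <;> rcases hcd' with ⟨rfl, rfl⟩ | ⟨rfl, rfl⟩ <;> tauto

theorem sbtw_iff_sbtw_of_walk (hS : NonCrossingChords n S) (hab : s(a, b) ∈ S)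
    (p : (chordGraph n S).Walk x y) (ha : a ∉ p.support) (hb : b ∉ p.support) :
    sbtw a x b ↔ sbtw a y b := by
  induction p with
  | nil => rfl
  | @cons x w y hxw p ih =>
    simp only [SimpleGraph.Walk.support_cons, List.mem_cons, not_or] at ha hb
    have hwa : w ≠ a := fun h => ha.2 (h ▸ p.start_mem_support)
    have hwb : w ≠ b := fun h => hb.2 (h ▸ p.start_mem_support)
    exact (hS.sbtw_iff_sbtw hab (mem_of_chordGraph_adj hxw) (Ne.symm ha.1) (Ne.symm hb.1)
      hwa hwb).trans (ih ha.2 hb.2)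

theorem sbtw_iff_sbtw_of_mem_path (hS : NonCrossingChords n S) (hab : s(a, b) ∈ S)
    {p : (chordGraph n S).Walk x a} (hp : p.IsPath) (hb : b ∉ p.support) (hy : y ∈ p.support)
    (hya : y ≠ a) : sbtw a x b ↔ sbtw a y b :=
  hS.sbtw_iff_sbtw_of_walk hab (p.takeUntil y hy)
    (SimpleGraph.Walk.endpoint_notMem_support_takeUntil hp hy hya.symm)
    fun h => hb (p.support_takeUntil_subset_support hy h)

theorem forall_not_sbtw_or_forall_not_sbtw_of_isPath (hS : NonCrossingChords n S)
    (hab : s(a, b) ∈ S) {p : (chordGraph n S).Walk b a} (hp : p.IsPath) :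
    (∀ w ∈ p.support, ¬ sbtw a w b) ∨ ∀ w ∈ p.support, ¬ sbtw b w a := by
  cases p with
  | nil => exact absurd rfl (hS.ne hab)
  | @cons _ x _ _ q =>
    rw [SimpleGraph.Walk.cons_isPath_iff] at hp
    have side_iff (w : ZMod n) (hw : w = b ∨ w ∈ q.support) (hwa : w ≠ a) (hwb : w ≠ b) :
        sbtw a x b ↔ sbtw a w b :=
      hS.sbtw_iff_sbtw_of_mem_path hab hp.1 hp.2 (hw.resolve_left hwb) hwa
    simp only [SimpleGraph.Walk.support_cons, List.mem_cons]
    by_cases hx : sbtw a x b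
    · refine .inr fun w hw hwba => sbtw_asymm hwba ((side_iff w hw ?_ ?_).1 hx)
      · rintro rfl; exact sbtw_irrefl_right hwba
      · rintro rfl; exact sbtw_irrefl_left hwba
    · refine .inl fun w hw hwab => hx ((side_iff w hw ?_ ?_).2 hwab)
      · rintro rfl; exact sbtw_irrefl_left hwab
      · rintro rfl; exact sbtw_irrefl_right hwab

theorem exists_arc_avoiding_cycle (hS : NonCrossingChords n S)
    {u : ZMod n} {c : (chordGraph n S).Walk u u} (hc : c.IsCycle)
    {e : Sym2 (ZMod n)} (he : e ∈ c.edges) :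
    ∃ a b, e = s(a, b) ∧ ∀ w ∈ c.support, ¬ sbtw a w b := by
  induction e with | _ a b
  have hab : s(a, b) ∈ S := mem_of_chordGraph_adj (c.adj_of_mem_edges he)
  obtain ⟨p, hp, hcp⟩ := exists_isPath_of_isCycle_of_mem_edges hc he
  rcases hS.forall_not_sbtw_or_forall_not_sbtw_of_isPath hab hp with hempty | hempty
  · exact ⟨a, b, rfl, fun w hw => hempty w (hcp hw)⟩
  · exact ⟨b, a, Sym2.eq_swap, fun w hw => hempty w (hcp hw)⟩

theorem exists_chordFree_sbtw (hS : NonCrossingChords n S) (hab : s(a, b) ∈ S) :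
    ∃ z, sbtw a z b ∧ ChordFree n S z := by
  induction harc : Set.cIoo a b using WellFoundedLT.induction generalizing a b with
  | ind arc ih =>
    subst harc
    have ha1 : sbtw a (a + 1) b := sbtw_add_one (hS.ne hab) (hS.add_one_ne hab)
    by_cases hfree : ChordFree n S (a + 1)
    · exact ⟨a + 1, ha1, hfree⟩
    obtain ⟨d, hd⟩ : ∃ d, s(a + 1, d) ∈ S := by
      simp only [ChordFree, not_forall, not_not] at hfree
      obtain ⟨e, he, hmem⟩ := hfree
      obtain ⟨d, rfl⟩ := hmem
      exact ⟨d, he⟩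
    have hda : d ≠ a := by
      rintro rfl
      exact hS.add_one_ne (Sym2.eq_swap ▸ hd) rfl
    have ha1d : sbtw a (a + 1) d := sbtw_add_one hda.symm (hS.ne hd)
    have hdb : d = b ∨ sbtw a d b := by
      refine or_iff_not_imp_left.2 fun hdb => (hS.sbtw_iff_sbtw hab hd ?_ ?_ hda hdb).1 ha1
      · intro h; exact sbtw_irrefl_left (h ▸ ha1)
      · exact hS.add_one_ne hab
    have subarc (z : ZMod n) (hz : sbtw (a + 1) z d) : sbtw a z b := by
      have hzd : sbtw a z d := ha1d.trans_left hz
      rcases hdb with rfl | hdb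
      · exact hzd
      · exact sbtw_trans_right hzd hdb
    have hlt : Set.cIoo (a + 1) d < Set.cIoo a b :=
      ⟨subarc, fun hle => sbtw_irrefl_left (hle ha1)⟩
    obtain ⟨z, hz, hzfree⟩ := ih _ hlt hd rfl
    exact ⟨z, subarc z hz, hzfree⟩

theorem exists_chordFree_isCutOff (hS : NonCrossingChords n S)
    {u : ZMod n} {c : (chordGraph n S).Walk u u} (hc : c.IsCycle)
    {e : Sym2 (ZMod n)} (he : e ∈ c.edges) :
    ∃ z, IsCutOff {w | w ∈ c.support} e z ∧ ChordFree n S z := by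
  obtain ⟨a, b, rfl, hempty⟩ := hS.exists_arc_avoiding_cycle hc he
  obtain ⟨z, hz, hfree⟩ :=
    hS.exists_chordFree_sbtw (mem_of_chordGraph_adj (c.adj_of_mem_edges he))
  exact ⟨z, ⟨a, b, rfl, hz, hempty⟩, hfree⟩

end NonCrossingChords

end NonCrossingChords

/-- Single-block case of the paper's Lemma 2: if the chord graph of a set of
pairwise non-crossing chords contains a cycle of length `i ≥ 3`, then at least
`i` vertices are chord-free. -/
theorem chord_free_of_cycle (n : ℕ) (hn : 3 ≤ n) (S : Set (Sym2 (ZMod n)))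
    (hS : NonCrossingChords n S) (i : ℕ) (hi : 3 ≤ i)
    (v : ZMod n) (c : (chordGraph n S).Walk v v)
    (hc : c.IsCycle) (hlen : c.length = i) :
    i ≤ {u : ZMod n | ChordFree n S u}.ncard := by
  have : NeZero n := ⟨by omega⟩
  choose! z hcut hfree using fun e (he : e ∈ c.edges) => hS.exists_chordFree_isCutOff hc he
  have mem_support {e : Sym2 (ZMod n)} (he : e ∈ c.edges) : ∀ x ∈ e, x ∈ c.support :=
    fun _ hx => c.mem_support_of_mem_edges he hx
  have hinj : Set.InjOn z c.edges.toFinset := by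
    intro e he e' he' hee'
    rw [Finset.mem_coe, List.mem_toFinset] at he he'
    exact (hcut e he).pair_unique (hee' ▸ hcut e' he') (mem_support he) (mem_support he')
  calc i = c.edges.toFinset.card := by
        rw [List.toFinset_card_of_nodup hc.edges_nodup, c.length_edges, hlen]
    _ = (c.edges.toFinset : Set (Sym2 (ZMod n))).ncard := (Set.ncard_coe_finset _).symm
    _ ≤ {u : ZMod n | ChordFree n S u}.ncard :=
        Set.ncard_le_ncard_of_injOn z (fun e he => hfree e (by simpa using he)) hinj
end
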